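/- Let ε ∈ (0,1) be irrational with continued fraction expansion ε = [0; a_1, a_2, …] and let x0 ∈ [0,1). Then the Sturmian word u_{ε,x0} of slope ε has finite index, ind(u_{ε,x0}) < +∞, if and only if the sequence of partial quotients (a_n)_{n≥1} is bounded. -/

import Mathlib

/-!
Write `g n = ⌊x0 - n ε⌋`. The letter at time `n` is the increment of `g` (`floor_succ`), so a
stretch of `u` has period `q` exactly when `g (n + q) - g n` is a constant `-p` along it, that is,
when the rotation orbit `x0 - n ε mod 1` avoids an arc of length `δ = |q ε - p|` adjacent to `0`.

Suppose the partial quotients are bounded. Then there are convergents at every scale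
(`exists_conv`). One of them, with denominator comparable to `q`, gives `δ ≥ c / q` (`err_lower`);
another one shows that `O(q)` consecutive orbit points meet every arc of length `c / q`
(`dense_orbit`). Hence a repetition of period `q` has length `O(q)` (`period_bound`), and the
index is finite.

Conversely, a partial quotient at least `2 b` gives coprime `p, q` with `δ ≤ 1 / (2 b q)`
(`exists_good`). Two visits to the arc differ by a time `k` with `k ε` within less than `δ` of an
integer, which is impossible for `k ≤ b q`. So some window of `b q` steps avoids the arc
(`exists_window`) and produces a factor of exponent at least `b`. Unbounded partial quotients
therefore force infinite index.
-/

/-- The alphabet of 3iet words. -/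
inductive L3 | A | B | C
deriving DecidableEq, Inhabited

/-- The three-interval exchange transformation `T_{ε,ℓ}`. -/
noncomputable def T3 (ε ℓ : ℝ) (x : ℝ) : ℝ :=
  if x < ℓ - 1 + ε then x + 1 - ε
  else if x < ε then x + 1 - 2*ε
  else x - ε

/-- The 3iet word `u_{ε,ℓ,x0}` coding the orbit of `x0` under `T_{ε,ℓ}`. -/
noncomputable def u3 (ε ℓ x0 : ℝ) (n : ℕ) : L3 :=
  if (T3 ε ℓ)^[n] x0 < ℓ - 1 + ε then L3.A
  else if (T3 ε ℓ)^[n] x0 < ε then L3.B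
  else L3.C

/-- The two-interval exchange transformation `T_ε`. -/
noncomputable def T2 (ε : ℝ) (x : ℝ) : ℝ := if x < ε then x + 1 - ε else x - ε

/-- The Sturmian word `u_{ε,x0}` of slope `ε` coding the orbit of `x0` under `T_ε`
(letter `0` is `false`, letter `1` is `true`). -/
noncomputable def u2 (ε x0 : ℝ) (n : ℕ) : Bool := if (T2 ε)^[n] x0 < ε then false else true

/-- `w` is a factor of the infinite word `u`. -/
def IsFactor {α : Type*} (w : List α) (u : ℕ → α) : Prop :=
  ∃ i : ℕ, w = (List.range w.length).map fun j => u (i + j)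

/-- The prefix of length `m` of the periodic infinite word `www⋯`;
for `|w| ≤ m` this is the fractional power `w^{m/|w|}`. -/
def powPrefix {α : Type*} [Inhabited α] (w : List α) (m : ℕ) : List α :=
  (List.range m).map fun j => w.getD (j % w.length) default

/-- The index of the factor `w` in the infinite word `u`:
`sup {r ∈ ℚ, r ≥ 1, r|w| ∈ ℕ | w^r is a factor of u}`, as an element of `ℝ ∪ {+∞}`. -/
noncomputable def factorIndex {α : Type*} [Inhabited α] (u : ℕ → α) (w : List α) : EReal :=
  sSup {x : EReal | ∃ m : ℕ, w.length ≤ m ∧ IsFactor (powPrefix w m) u ∧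
    x = (((m : ℝ) / (w.length : ℝ) : ℝ) : EReal)}

/-- The index of the infinite word `u`: `sup {ind(w) | w a nonempty factor of u}`. -/
noncomputable def wordIndex {α : Type*} [Inhabited α] (u : ℕ → α) : EReal :=
  sSup {x : EReal | ∃ w : List α, w ≠ [] ∧ IsFactor w u ∧ x = factorIndex u w}

/-- The Gauss map `x ↦ {1/x}`. -/
noncomputable def gaussMap (x : ℝ) : ℝ := Int.fract x⁻¹

/-- `cfa ε n` is the partial quotient `a_{n+1}` of the continued fraction
expansion `ε = [0; a₁, a₂, a₃, …]` of the irrational `ε ∈ (0,1)`. -/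
noncomputable def cfa (ε : ℝ) (n : ℕ) : ℕ := ⌊(gaussMap^[n] ε)⁻¹⌋₊

/-- The morphism `σ01 : A ↦ 0, B ↦ 01, C ↦ 1`. -/
def sigma01 : L3 → List Bool
  | L3.A => [false]
  | L3.B => [false, true]
  | L3.C => [true]

/-- The morphism `σ10 : A ↦ 0, B ↦ 10, C ↦ 1`. -/
def sigma10 : L3 → List Bool
  | L3.A => [false]
  | L3.B => [true, false]
  | L3.C => [true]

/-- The image `φ(u₀)φ(u₁)φ(u₂)⋯` of an infinite word `u` under a (nonerasing) morphism `φ`. -/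
def morphWord (φ : L3 → List Bool) (u : ℕ → L3) (m : ℕ) : Bool :=
  ((List.range (m+1)).flatMap fun k => φ (u k)).getD m false

/-- `u` is a uniformly recurrent infinite word: every factor occurs infinitely often
with bounded gaps (every window of some length `R` contains an occurrence). -/
def UniformlyRecurrent {α : Type*} (u : ℕ → α) : Prop :=
  ∀ w : List α, IsFactor w u → ∃ R : ℕ, ∀ i : ℕ, ∃ j : ℕ, i ≤ j ∧ j < i + R ∧
    w = (List.range w.length).map fun t => u (j + t)

/-- `u` is eventually periodic. -/
def EventuallyPeriodic {α : Type*} (u : ℕ → α) : Prop :=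
  ∃ N p : ℕ, 0 < p ∧ ∀ n : ℕ, N ≤ n → u (n + p) = u n

/-- The standard words of `ε = [0; a₁, a₂, …]`, with the index shifted by one:
`sw ε 0 = s₋₁ = 1`, `sw ε 1 = s₀ = 0`, `sw ε 2 = s₁ = s₀^{a₁-1} s₋₁`, and
`sw ε (n+3) = s_{n+2} = s_{n+1}^{a_{n+2}} s_n`. -/
noncomputable def sw (ε : ℝ) : ℕ → List Bool
  | 0 => [true]
  | 1 => [false]
  | 2 => (List.replicate (cfa ε 0 - 1) ([false] : List Bool)).flatten ++ [true]
  | (n+3) => (List.replicate (cfa ε (n+1)) (sw ε (n+2))).flatten ++ sw ε (n+1)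

/-- Denominators of the convergents of `ε`, shifted by one: `qq ε 0 = q₋₁ = 0`,
`qq ε 1 = q₀ = 1`, and `qq ε (n+2) = q_{n+1} = a_{n+1} q_n + q_{n-1}`. -/
noncomputable def qq (ε : ℝ) : ℕ → ℕ
  | 0 => 0
  | 1 => 1
  | (n+2) => cfa ε n * qq ε (n+1) + qq ε n

/-- `u` is a 3iet word. -/
def Is3ietWord (u : ℕ → L3) : Prop :=
  ∃ ε ℓ x0 : ℝ, Irrational ε ∧ 0 < ε ∧ ε < 1 ∧ max ε (1 - ε) < ℓ ∧ ℓ < 1 ∧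
    x0 ∈ Set.Ico 0 ℓ ∧ u = u3 ε ℓ x0

/-- `v` is a Sturmian word. -/
def IsSturmianWord (v : ℕ → Bool) : Prop :=
  ∃ ε x0 : ℝ, Irrational ε ∧ 0 < ε ∧ ε < 1 ∧ x0 ∈ Set.Ico (0:ℝ) 1 ∧ v = u2 ε x0

/-- The infinite binary word `v1` is amicable with `v2` (`v1 ∝ v2`). -/
def AmicableInf (v1 v2 : ℕ → Bool) : Prop :=
  ∃ w : ℕ → L3, v1 = morphWord sigma01 w ∧ v2 = morphWord sigma10 w

/-- The morphism `Φ_k : A ↦ 0, B ↦ 01^{k+1}, C ↦ 01^k`. -/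
def Phi (k : ℕ) : L3 → List Bool
  | L3.A => [false]
  | L3.B => false :: List.replicate (k+1) true
  | L3.C => false :: List.replicate k true

/-- The infinite word `B₀B₁B₂⋯` obtained by concatenating the sequence of
(nonempty) blocks `B`. -/
def concatOfBlocks (B : ℕ → List Bool) (m : ℕ) : Bool :=
  ((List.range (m+1)).flatMap B).getD m false

/-! ### Continued fractions -/

lemma gauss_iter (ε : ℝ) (hirr : Irrational ε) (h0 : 0 < ε) (h1 : ε < 1) (n : ℕ) :
    Irrational (gaussMap^[n] ε) ∧ 0 < gaussMap^[n] ε ∧ gaussMap^[n] ε < 1 := by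
  induction n with
  | zero => exact ⟨hirr, h0, h1⟩
  | succ n ih =>
    rw [Function.iterate_succ_apply']
    obtain ⟨hi, -, -⟩ := ih
    have hfr : Irrational (gaussMap (gaussMap^[n] ε)) := by
      unfold gaussMap
      rw [Int.fract]
      exact hi.inv.sub_intCast _
    refine ⟨hfr, lt_of_le_of_ne (Int.fract_nonneg _) (Ne.symm hfr.ne_zero), Int.fract_lt_one _⟩

/-- The products `θ₀ θ₁ ⋯ θ_{n-1}` of the Gauss orbit of `ε`; up to sign these are the
approximation errors `ε q - p` of the convergents (see `err_eq`). -/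
noncomputable def cfErr (ε : ℝ) (n : ℕ) : ℝ := ∏ k ∈ Finset.range n, gaussMap^[k] ε

/-- Numerators of the convergents of `ε`, with the same index shift as `qq`. -/
noncomputable def pp (ε : ℝ) : ℕ → ℕ
  | 0 => 1
  | 1 => 0
  | (n+2) => cfa ε n * pp ε (n+1) + pp ε n

lemma cfErr_pos (ε : ℝ) (hirr : Irrational ε) (h0 : 0 < ε) (h1 : ε < 1) (n : ℕ) :
    0 < cfErr ε n :=
  Finset.prod_pos fun k _ => (gauss_iter ε hirr h0 h1 k).2.1

lemma cfErr_rec (ε : ℝ) (hirr : Irrational ε) (h0 : 0 < ε) (h1 : ε < 1) (n : ℕ) :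
    cfErr ε n = cfa ε n * cfErr ε (n+1) + cfErr ε (n+2) := by
  obtain ⟨-, hp, -⟩ := gauss_iter ε hirr h0 h1 n
  have e : (cfa ε n : ℝ) + gaussMap^[n+1] ε = (gaussMap^[n] ε)⁻¹ := by
    rw [Function.iterate_succ_apply']
    rw [cfa, gaussMap, natCast_floor_eq_intCast_floor (inv_pos.2 hp).le]
    exact Int.floor_add_fract _
  have s1 : cfErr ε (n+1) = cfErr ε n * gaussMap^[n] ε := Finset.prod_range_succ _ _
  have s2 : cfErr ε (n+2) = cfErr ε (n+1) * gaussMap^[n+1] ε := Finset.prod_range_succ _ _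
  rw [s2, mul_comm (cfa ε n : ℝ), ← mul_add, e, s1, mul_assoc, mul_inv_cancel₀ hp.ne', mul_one]

lemma cfa_pos (ε : ℝ) (hirr : Irrational ε) (h0 : 0 < ε) (h1 : ε < 1) (n : ℕ) :
    1 ≤ cfa ε n := by
  obtain ⟨-, hp, hl⟩ := gauss_iter ε hirr h0 h1 n
  refine Nat.le_floor ?_
  simpa using (one_le_inv₀ hp).2 hl.le

lemma err_eq (ε : ℝ) (hirr : Irrational ε) (h0 : 0 < ε) (h1 : ε < 1) (n : ℕ) :
    qq ε n * ε - pp ε n = (-1)^(n+1) * cfErr ε n ∧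
    qq ε (n+1) * ε - pp ε (n+1) = (-1)^(n+2) * cfErr ε (n+1) := by
  induction n with
  | zero => simp [qq, pp, cfErr]
  | succ n ih =>
    refine ⟨ih.2, ?_⟩
    have hq : (qq ε (n+2) : ℝ) = cfa ε n * qq ε (n+1) + qq ε n := by
      rw [qq]; push_cast; ring
    have hp : (pp ε (n+2) : ℝ) = cfa ε n * pp ε (n+1) + pp ε n := by
      rw [pp]; push_cast; ring
    have hr := cfErr_rec ε hirr h0 h1 n
    obtain ⟨i1, i2⟩ := ih
    rw [show n+1+1 = n+2 from rfl, hq, hp]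
    have : cfErr ε (n+2) = cfErr ε n - cfa ε n * cfErr ε (n+1) := by linarith
    rw [this]
    linear_combination (cfa ε n : ℝ) * i2 + i1

lemma abs_err (ε : ℝ) (hirr : Irrational ε) (h0 : 0 < ε) (h1 : ε < 1) (n : ℕ) :
    |qq ε n * ε - pp ε n| = cfErr ε n := by
  rw [(err_eq ε hirr h0 h1 n).1, abs_mul, abs_pow, abs_neg, abs_one, one_pow, one_mul,
    abs_of_pos (cfErr_pos ε hirr h0 h1 n)]

lemma cfErr_sum (ε : ℝ) (hirr : Irrational ε) (h0 : 0 < ε) (h1 : ε < 1) (n : ℕ) :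
    qq ε (n+1) * cfErr ε n + qq ε n * cfErr ε (n+1) = 1 := by
  induction n with
  | zero => simp [qq, cfErr]
  | succ n ih =>
    have hq : (qq ε (n+2) : ℝ) = cfa ε n * qq ε (n+1) + qq ε n := by
      rw [qq]; push_cast; ring
    have hr := cfErr_rec ε hirr h0 h1 n
    rw [hr] at ih
    rw [show n+1+1 = n+2 from rfl, hq]
    linear_combination ih

lemma cfErr_mul_le (ε : ℝ) (hirr : Irrational ε) (h0 : 0 < ε) (h1 : ε < 1) (n : ℕ) :
    qq ε (n+1) * cfErr ε n ≤ 1 := by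
  have := cfErr_sum ε hirr h0 h1 n
  have h2 : 0 ≤ qq ε n * cfErr ε (n+1) :=
    mul_nonneg (Nat.cast_nonneg _) (cfErr_pos ε hirr h0 h1 _).le
  linarith

lemma det_eq (ε : ℝ) (n : ℕ) :
    (pp ε n : ℤ) * qq ε (n+1) - pp ε (n+1) * qq ε n = (-1)^n := by
  induction n with
  | zero => simp [qq, pp]
  | succ n ih =>
    rw [show n+1+1 = n+2 from rfl, qq, pp]
    push_cast
    rw [pow_succ]
    linear_combination -ih

lemma coprime_pq (ε : ℝ) (n : ℕ) : IsCoprime (pp ε (n+1) : ℤ) (qq ε (n+1) : ℤ) := by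
  have h := det_eq ε n
  have hs : ((-1:ℤ)^n) * (-1)^n = 1 := by rw [← mul_pow]; simp
  refine ⟨-(-1)^n * qq ε n, (-1)^n * pp ε n, ?_⟩
  linear_combination (-1)^n * h + hs

lemma qq_mono (ε : ℝ) (hirr : Irrational ε) (h0 : 0 < ε) (h1 : ε < 1) (n : ℕ) :
    qq ε n ≤ qq ε (n+1) := by
  cases n with
  | zero => simp [qq]
  | succ n =>
    rw [show n+1+1 = n+2 from rfl, qq]
    nlinarith [cfa_pos ε hirr h0 h1 n]

lemma qq_pos (ε : ℝ) (hirr : Irrational ε) (h0 : 0 < ε) (h1 : ε < 1) (n : ℕ) :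
    0 < qq ε (n+1) := by
  induction n with
  | zero => simp [qq]
  | succ n ih => exact ih.trans_le (qq_mono ε hirr h0 h1 _)

lemma le_qq (ε : ℝ) (hirr : Irrational ε) (h0 : 0 < ε) (h1 : ε < 1) (n : ℕ) :
    n ≤ qq ε (n+2) := by
  induction n with
  | zero => simp
  | succ n ih =>
    have := qq_pos ε hirr h0 h1 n
    rw [show n+1+2 = (n+1)+2 from rfl, qq]
    nlinarith [cfa_pos ε hirr h0 h1 (n+1)]

/-- If the partial quotients are bounded by `K`, the denominators grow at most by a factor
`K + 1` at each step, so every scale `A` is matched by a convergent `P / Q`. -/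
lemma exists_conv (ε : ℝ) (hirr : Irrational ε) (h0 : 0 < ε) (h1 : ε < 1) (K : ℕ)
    (hK : ∀ n, cfa ε n ≤ K) (A : ℕ) (hA : 1 ≤ A) :
    ∃ (Q : ℕ) (P : ℤ), A ≤ Q ∧ Q ≤ (K+1) * A ∧ IsCoprime P (Q:ℤ) ∧ |Q * ε - P| * Q ≤ 1 := by
  classical
  have hex : ∃ n, A ≤ qq ε (n+1) := ⟨A+1, le_qq ε hirr h0 h1 A⟩
  obtain ⟨n, hn, hmin⟩ : ∃ n, A ≤ qq ε (n+1) ∧ ∀ m < n, qq ε (m+1) < A :=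
    ⟨Nat.find hex, Nat.find_spec hex, fun m hm => not_le.1 (Nat.find_min hex hm)⟩
  refine ⟨qq ε (n+1), pp ε (n+1), hn, ?_, coprime_pq ε n, ?_⟩
  · cases n with
    | zero => simp only [qq]; nlinarith
    | succ n =>
      have h2 := hmin n (Nat.lt_succ_self n)
      have h3 := qq_mono ε hirr h0 h1 n
      rw [show n+1+1 = n+2 from rfl, qq]
      have h4 := Nat.mul_le_mul (hK n) h2.le
      nlinarith
  · have h2 := abs_err ε hirr h0 h1 (n+1)
    have h3 := cfErr_mul_le ε hirr h0 h1 (n+1)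
    have h4 : (qq ε (n+1) : ℝ) ≤ qq ε (n+1+1) := by exact_mod_cast qq_mono ε hirr h0 h1 (n+1)
    push_cast
    rw [h2, mul_comm]
    exact (mul_le_mul_of_nonneg_right h4 (cfErr_pos ε hirr h0 h1 _).le).trans h3

/-- A convergent followed by a large partial quotient is an exceptionally good approximation. -/
lemma exists_good (ε : ℝ) (hirr : Irrational ε) (h0 : 0 < ε) (h1 : ε < 1) (n : ℕ) :
    ∃ (q : ℕ) (p : ℤ), 0 < q ∧ IsCoprime p (q:ℤ) ∧ |q * ε - p| * (cfa ε n * q) ≤ 1 := by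
  refine ⟨qq ε (n+1), pp ε (n+1), qq_pos ε hirr h0 h1 n, coprime_pq ε n, ?_⟩
  have h2 := abs_err ε hirr h0 h1 (n+1)
  have h3 := cfErr_mul_le ε hirr h0 h1 (n+1)
  have hq : (qq ε (n+1+1) : ℝ) = cfa ε n * qq ε (n+1) + qq ε n := by
    rw [show n+1+1 = n+2 from rfl, qq]; push_cast; ring
  push_cast
  rw [h2]
  rw [hq] at h3
  have h4 : 0 ≤ (qq ε n : ℝ) * cfErr ε (n+1) :=
    mul_nonneg (Nat.cast_nonneg _) (cfErr_pos ε hirr h0 h1 _).le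
  linarith

/-! ### Coding by integer parts -/

lemma T2_iter (ε x0 : ℝ) (h0 : 0 < ε) (h1 : ε < 1) (hx0 : x0 ∈ Set.Ico (0:ℝ) 1) (n : ℕ) :
    (T2 ε)^[n] x0 = Int.fract (x0 - n * ε) := by
  induction n with
  | zero => simp [Int.fract_eq_self.2 ⟨hx0.1, hx0.2⟩]
  | succ n ih =>
    rw [Function.iterate_succ_apply', ih, T2]
    have ha := Int.fract_nonneg (x0 - n * ε)
    have hb := Int.fract_lt_one (x0 - n * ε)
    have hc := Int.floor_add_fract (x0 - n * ε)
    symm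
    split_ifs with h
    · rw [Int.fract_eq_iff]
      refine ⟨by linarith, by linarith, ⌊x0 - n * ε⌋ - 1, ?_⟩
      push_cast; linarith
    · rw [Int.fract_eq_iff]
      refine ⟨by linarith, by linarith, ⌊x0 - n * ε⌋, ?_⟩
      push_cast; linarith

/-- The letter read at time `n` is the increment of the integer part of `x0 - n ε`. -/
lemma floor_succ (ε x0 : ℝ) (h0 : 0 < ε) (h1 : ε < 1) (hx0 : x0 ∈ Set.Ico (0:ℝ) 1) (n : ℕ) :
    ⌊x0 - ((n+1 : ℕ):ℝ) * ε⌋ = ⌊x0 - n * ε⌋ - (if u2 ε x0 n then 0 else 1) := by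
  have ha := Int.fract_nonneg (x0 - n * ε)
  have hb := Int.fract_lt_one (x0 - n * ε)
  have hc := Int.floor_add_fract (x0 - n * ε)
  rw [u2, T2_iter ε x0 h0 h1 hx0, Int.floor_eq_iff]
  by_cases h : Int.fract (x0 - n * ε) < ε
  · simp only [h, if_true]; push_cast; simp; constructor <;> linarith
  · simp only [h, if_false]; push_cast; simp; constructor <;> linarith

/-! ### Rational approximation and orbits of the rotation -/

/-- A segment of `Q` consecutive orbit points meets every arc of length `3 / Q`, because the
segment is within `1 / Q` of a translate of the cyclic group of order `Q` in the circle. -/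
lemma dense_orbit (ε : ℝ) (Q : ℕ) (P : ℤ) (hQ : 0 < Q) (hc : IsCoprime P (Q:ℤ))
    (hap : |Q * ε - P| * Q ≤ 1) (x a : ℝ) :
    ∃ j < Q, ∃ s : ℤ, a < x - j * ε - s ∧ x - j * ε - s < a + 3 / Q := by
  obtain ⟨u, v, huv⟩ := hc
  set r : ℤ := ⌊Q * (x - a)⌋ - 1 with hr
  have hQz : (0:ℤ) < Q := by exact_mod_cast hQ
  have hQr : (0:ℝ) < Q := by exact_mod_cast hQ
  have hj0 : 0 ≤ (u * r) % Q := Int.emod_nonneg _ hQz.ne'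
  have hj1 : (u * r) % Q < Q := Int.emod_lt_of_pos _ hQz
  obtain ⟨j, hj⟩ := Int.eq_ofNat_of_zero_le hj0
  rw [hj] at hj1
  have hjQ : j < Q := by exact_mod_cast hj1
  -- `j P ≡ r` modulo `Q`
  have hd : (Q:ℤ) ∣ r - j * P := by
    have h2 := Int.mul_ediv_add_emod (u * r) Q
    rw [hj] at h2
    refine ⟨v * r + ((u * r) / Q) * P, ?_⟩
    linear_combination (-r) * huv - P * h2
  obtain ⟨s, hs⟩ := hd
  have hsR : (r:ℝ) - j * P = Q * s := by exact_mod_cast hs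
  have hf1 := Int.floor_le (Q * (x - a))
  have hf2 := Int.lt_floor_add_one (Q * (x - a))
  have hrR : (r:ℝ) = ⌊Q * (x - a)⌋ - 1 := by rw [hr]; push_cast; ring
  have hjR : (j:ℝ) < Q := by exact_mod_cast hjQ
  have hj0R : (0:ℝ) ≤ j := Nat.cast_nonneg j
  have herr : |(Q * ε - P) * j| < 1 ∨ (Q * ε - P) * j = 0 := by
    by_cases hz : (Q * ε - P) = 0
    · right; rw [hz, zero_mul]
    · left
      rw [abs_mul, abs_of_nonneg hj0R]
      exact (mul_lt_mul_of_pos_left hjR (abs_pos.2 hz)).trans_le hap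
  have herr' : -1 < (Q * ε - P) * j ∧ (Q * ε - P) * j < 1 := by
    rcases herr with h | h
    · exact abs_lt.1 h
    · rw [h]; norm_num
  have key : Q * (x - j * ε - s - a) = Q * (x - a) - r - (Q * ε - P) * j := by
    linear_combination hsR
  refine ⟨j, hjQ, s, ?_, ?_⟩
  · have : 0 < Q * (x - j * ε - s - a) := by rw [key]; linarith [herr'.2]
    have := pos_of_mul_pos_right this hQr.le
    linarith
  · have h3 : Q * (x - j * ε - s - a) < 3 := by rw [key]; linarith [herr'.1]
    have : x - j * ε - s - a < 3 / Q := by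
      rw [lt_div_iff₀ hQr]; linarith
    linarith

/-- Denominators `q ≤ Q / 2` cannot approximate `ε` with error below `1 / (2 Q)`, where `P / Q`
is a reduced fraction with `|ε - P / Q| ≤ 1 / Q²`. -/
lemma err_lower (ε : ℝ) (Q : ℕ) (P : ℤ) (hc : IsCoprime P (Q:ℤ))
    (hap : |Q * ε - P| * Q ≤ 1) (q : ℕ) (hq : 0 < q) (hqQ : 2 * q ≤ Q) (p : ℤ) :
    1 ≤ |q * ε - p| * (2 * Q) := by
  have hne : (q:ℤ) * P - p * Q ≠ 0 := by
    intro h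
    have hd : (Q:ℤ) ∣ q := hc.symm.dvd_of_dvd_mul_right ⟨p, by linear_combination h⟩
    have := Int.le_of_dvd (by exact_mod_cast hq) hd
    omega
  have h1 : (1:ℝ) ≤ |(q:ℝ) * P - p * Q| := by
    exact_mod_cast Int.one_le_abs hne
  have h2 : (q:ℝ) * P - p * Q = (q * ε - p) * Q - (Q * ε - P) * q := by ring
  have h3 := abs_sub ((q * ε - p) * Q) ((Q * ε - P) * q)
  rw [← h2, abs_mul, abs_mul, Nat.abs_cast, Nat.abs_cast] at h3
  have h4 : (2:ℝ) * q ≤ Q := by exact_mod_cast hqQ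
  have h5 := mul_le_mul_of_nonneg_left h4 (abs_nonneg (Q * ε - P))
  linarith

/-! ### Repetitions as constant floor differences -/

/-- Inside a repetition of period `q`, the integer part drops by a constant `p` over each
period. -/
lemma floor_of_period (ε x0 : ℝ) (h0 : 0 < ε) (h1 : ε < 1) (hx0 : x0 ∈ Set.Ico (0:ℝ) 1)
    (i q M : ℕ) (hper : ∀ j < M, u2 ε x0 (i + j) = u2 ε x0 (i + j + q)) :
    ∃ p : ℤ, ∀ j ≤ M, ⌊x0 - ((i + j + q : ℕ):ℝ) * ε⌋ = ⌊x0 - ((i + j : ℕ):ℝ) * ε⌋ - p := by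
  refine ⟨⌊x0 - ((i : ℕ):ℝ) * ε⌋ - ⌊x0 - ((i + q : ℕ):ℝ) * ε⌋, ?_⟩
  intro j
  induction j with
  | zero => intro _; simp
  | succ j ih =>
    intro hj
    have e := ih (by omega)
    have h := hper j (by omega)
    have a1 := floor_succ ε x0 h0 h1 hx0 (i + j)
    have a2 := floor_succ ε x0 h0 h1 hx0 (i + j + q)
    rw [show i + (j+1) + q = i + j + q + 1 by ring, show i + (j+1) = i + j + 1 by ring,
      a1, a2, e, h]
    ring

lemma period_of_floor (ε x0 : ℝ) (h0 : 0 < ε) (h1 : ε < 1) (hx0 : x0 ∈ Set.Ico (0:ℝ) 1)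
    (n q : ℕ) (p : ℤ) (ha : ⌊x0 - ((n + q : ℕ):ℝ) * ε⌋ = ⌊x0 - (n:ℝ) * ε⌋ - p)
    (hb : ⌊x0 - ((n + 1 + q : ℕ):ℝ) * ε⌋ = ⌊x0 - ((n + 1 : ℕ):ℝ) * ε⌋ - p) :
    u2 ε x0 (n + q) = u2 ε x0 n := by
  have a1 := floor_succ ε x0 h0 h1 hx0 n
  have a2 := floor_succ ε x0 h0 h1 hx0 (n + q)
  rw [show n + 1 + q = n + q + 1 by ring, a1, a2, ha] at hb
  cases h : u2 ε x0 (n + q) <;> cases h' : u2 ε x0 n <;> simp [h, h'] at hb ⊢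
  omega

/-- If the partial quotients are bounded, a repetition of period `q` has length `O(q)`. -/
lemma period_bound (ε x0 : ℝ) (hirr : Irrational ε) (h0 : 0 < ε) (h1 : ε < 1)
    (hx0 : x0 ∈ Set.Ico (0:ℝ) 1) (K : ℕ) (hK : ∀ n, cfa ε n ≤ K)
    (i q M : ℕ) (hq : 0 < q) (hper : ∀ j < M, u2 ε x0 (i + j) = u2 ε x0 (i + j + q)) :
    M ≤ 12 * (K+1)^2 * q := by
  by_contra hM
  push Not at hM
  obtain ⟨Q, P, hQ1, hQ2, hc, hap⟩ := exists_conv ε hirr h0 h1 K hK (2*q) (by omega)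
  obtain ⟨R, S, hR1, hR2, hc', hap'⟩ := exists_conv ε hirr h0 h1 K hK (6*Q) (by omega)
  have hRM : R ≤ M := by nlinarith
  obtain ⟨p, hp⟩ := floor_of_period ε x0 h0 h1 hx0 i q M hper
  have hlow := err_lower ε Q P hc hap q hq hQ1 p
  have hQpos : (0:ℝ) < Q := by exact_mod_cast (by omega : 0 < Q)
  have hRpos : (0:ℝ) < R := by exact_mod_cast (by omega : 0 < R)
  have hRQ : (6:ℝ) * Q ≤ R := by exact_mod_cast hR1
  have hR1' : (3:ℝ) / R ≤ 1 := by
    rw [div_le_one hRpos]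
    exact_mod_cast (by omega : 3 ≤ R)
  have hRη : (3:ℝ) / R ≤ |q * ε - p| := by
    rw [div_le_iff₀ hRpos]
    have := mul_le_mul_of_nonneg_left hRQ (abs_nonneg (q * ε - p))
    linarith
  -- the arc adjacent to `0` that the orbit must avoid lies on the side given by the sign
  rcases le_total 0 (q * ε - p) with hs | hs
  · rw [abs_of_nonneg hs] at hRη
    obtain ⟨j, hj, s, hs1, hs2⟩ :=
      dense_orbit ε R S (by omega) hc' hap' (x0 - (i:ℝ) * ε) 0
    have e := hp j (by omega)
    have f : ⌊x0 - ((i + j : ℕ):ℝ) * ε⌋ = s := by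
      rw [Int.floor_eq_iff]; push_cast; constructor <;> linarith
    rw [f, Int.floor_eq_iff] at e
    push_cast at e
    linarith [e.1]
  · rw [abs_of_nonpos hs] at hRη
    obtain ⟨j, hj, s, hs1, hs2⟩ :=
      dense_orbit ε R S (by omega) hc' hap' (x0 - (i:ℝ) * ε) (1 - 3 / R)
    have e := hp j (by omega)
    have f : ⌊x0 - ((i + j : ℕ):ℝ) * ε⌋ = s := by
      rw [Int.floor_eq_iff]; push_cast; constructor <;> linarith
    rw [f, Int.floor_eq_iff] at e
    push_cast at e
    linarith [e.2]

/-- If subtracting `η` changes the integer parts of both `y` and `y'`, then both lie near an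
integer on the same side of it, so `y - y'` is at distance less than `|η|` from an integer. -/
lemma carry_close (η y y' : ℝ) (h : ⌊y - η⌋ ≠ ⌊y⌋) (h' : ⌊y' - η⌋ ≠ ⌊y'⌋) :
    ∃ t : ℤ, |y - y' - t| < |η| := by
  have a1 := Int.floor_le y
  have a2 := Int.lt_floor_add_one y
  have b1 := Int.floor_le y'
  have b2 := Int.lt_floor_add_one y'
  rcases le_total 0 η with hη | hη
  · refine ⟨⌊y⌋ - ⌊y'⌋, ?_⟩
    have c : y - η < ⌊y⌋ := by
      by_contra hc
      exact h (Int.floor_eq_iff.2 ⟨not_lt.1 hc, by linarith⟩)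
    have c' : y' - η < ⌊y'⌋ := by
      by_contra hc
      exact h' (Int.floor_eq_iff.2 ⟨not_lt.1 hc, by linarith⟩)
    rw [abs_of_nonneg hη, abs_lt]
    push_cast
    constructor <;> linarith
  · refine ⟨⌊y⌋ - ⌊y'⌋, ?_⟩
    have c : ⌊y⌋ + 1 ≤ y - η := by
      by_contra hc
      exact h (Int.floor_eq_iff.2 ⟨by linarith, not_le.1 hc⟩)
    have c' : ⌊y'⌋ + 1 ≤ y' - η := by
      by_contra hc
      exact h' (Int.floor_eq_iff.2 ⟨by linarith, not_le.1 hc⟩)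
    rw [abs_of_nonpos hη, abs_lt]
    push_cast
    constructor <;> linarith

/-- If `|q ε - p| ≤ 1 / (2 b q)`, two times at which the floor difference over `q` steps is not
`-p` are more than `b q` apart, hence some window of length `b q` contains no such time. -/
lemma exists_window (ε x0 : ℝ) (q b : ℕ) (p : ℤ) (hq : 0 < q) (hb : 0 < b)
    (hc : IsCoprime p (q:ℤ)) (hap : |q * ε - p| * (2 * b * q) ≤ 1) :
    ∃ i : ℕ, ∀ j < b * q,
      ⌊x0 - ((i + j + q : ℕ):ℝ) * ε⌋ = ⌊x0 - ((i + j : ℕ):ℝ) * ε⌋ - p := by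
  by_contra hcon
  push Not at hcon
  obtain ⟨n, -, hn⟩ := hcon 0
  obtain ⟨j, hj, hbad⟩ := hcon (n + 1)
  set δ := |q * ε - p| with hδ
  have conv : ∀ m : ℕ, ⌊x0 - ((m + q : ℕ):ℝ) * ε⌋ ≠ ⌊x0 - (m:ℝ) * ε⌋ - p →
      ⌊(x0 - (m:ℝ) * ε) - (q * ε - p)⌋ ≠ ⌊x0 - (m:ℝ) * ε⌋ := by
    intro m hm he
    apply hm
    rw [← he, ← Int.floor_sub_intCast]
    congr 1
    push_cast; ring
  rw [Nat.zero_add] at hn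
  obtain ⟨t, ht⟩ := carry_close _ _ _ (conv _ hn) (conv _ hbad)
  obtain ⟨k, hk⟩ : ∃ k : ℕ, k = j + 1 := ⟨_, rfl⟩
  have hkR : (k:ℝ) = j + 1 := by exact_mod_cast hk
  have ht' : |k * ε - t| < δ := by
    have : x0 - (n:ℝ) * ε - (x0 - ((n + 1 + j : ℕ):ℝ) * ε) - t = k * ε - t := by
      push_cast; rw [hkR]; ring
    rwa [this] at ht
  have hδ0 : 0 < δ := lt_of_le_of_lt (abs_nonneg _) ht'
  have hqR : (1:ℝ) ≤ q := by exact_mod_cast hq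
  have hbR : (1:ℝ) ≤ b := by exact_mod_cast hb
  have hkN : (k:ℝ) ≤ b * q := by exact_mod_cast (by omega : k ≤ b * q)
  by_cases hz : (k:ℤ) * p - t * q = 0
  · -- then `k = c q`, `t = c p` and the error is `c δ ≥ δ`
    have hd : (q:ℤ) ∣ k := hc.symm.dvd_of_dvd_mul_right ⟨t, by linear_combination hz⟩
    obtain ⟨c, hcq⟩ := hd
    have hqz : (q:ℤ) ≠ 0 := by exact_mod_cast hq.ne'
    have htc : t = c * p := by
      apply mul_right_cancel₀ hqz
      rw [hcq] at hz
      linear_combination -hz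
    have hc1 : 1 ≤ |c| := by
      apply Int.one_le_abs
      rintro rfl
      simp at hcq
      omega
    have hc1R : (1:ℝ) ≤ |(c:ℝ)| := by exact_mod_cast hc1
    have hkc : (k:ℝ) = q * c := by exact_mod_cast hcq
    have e : (k:ℝ) * ε - t = c * (q * ε - p) := by
      rw [hkc, htc]; push_cast; ring
    rw [e, abs_mul, ← hδ] at ht'
    nlinarith
  · have h1 : (1:ℝ) ≤ |(k:ℝ) * p - t * q| := by exact_mod_cast Int.one_le_abs hz
    have h2 : (k:ℝ) * p - t * q = (k * ε - t) * q - (q * ε - p) * k := by ring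
    have h3 := abs_sub ((k * ε - t) * q) ((q * ε - p) * k)
    rw [← h2, abs_mul, abs_mul, Nat.abs_cast, Nat.abs_cast, ← hδ] at h3
    have h4 : |k * ε - t| * q < δ * q := mul_lt_mul_of_pos_right ht' (by linarith)
    have h5 := mul_le_mul_of_nonneg_left hkN hδ0.le
    have h6 : δ * q ≤ δ * (b * q) := by
      apply mul_le_mul_of_nonneg_left _ hδ0.le
      nlinarith
    linarith

/-! ### Powers as factors -/

lemma isFactor_powPrefix_iff {α : Type*} [Inhabited α] (u : ℕ → α) (w : List α) (m : ℕ) :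
    IsFactor (powPrefix w m) u ↔
      ∃ i, ∀ j < m, w.getD (j % w.length) default = u (i + j) := by
  unfold IsFactor powPrefix
  simp only [List.length_map, List.length_range]
  refine exists_congr fun i => ?_
  rw [List.map_inj_left]
  simp only [List.mem_range]

/-- A stretch of `u` with period `q` yields a factor of length `q` whose power of total length
`m` occurs in `u`. -/
lemma ratio_le_wordIndex {α : Type*} [Inhabited α] (u : ℕ → α) (i q m : ℕ) (hq : 0 < q)
    (hqm : q ≤ m) (hper : ∀ j, j + q < m → u (i + j + q) = u (i + j)) :
    (((m : ℝ) / (q : ℝ) : ℝ) : EReal) ≤ wordIndex u := by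
  set w : List α := (List.range q).map fun j => u (i + j) with hw
  have hl : w.length = q := by simp [hw]
  have hfac : IsFactor w u := ⟨i, by rw [hl]⟩
  have hne : w ≠ [] := by
    intro h
    rw [h] at hl
    simp at hl
    omega
  have hget : ∀ r < q, w.getD r default = u (i + r) := by
    intro r hr
    simp [hw, hr]
  have hpow : IsFactor (powPrefix w m) u := by
    rw [isFactor_powPrefix_iff]
    refine ⟨i, ?_⟩
    rw [hl]
    intro j
    induction j using Nat.strong_induction_on with
    | _ j ih =>
      intro hj
      by_cases hjq : j < q
      · rw [Nat.mod_eq_of_lt hjq, hget j hjq]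
      · obtain ⟨d, rfl⟩ : ∃ d, j = d + q := ⟨j - q, by omega⟩
        rw [Nat.add_mod_right, ih d (by omega) (by omega), ← hper d hj, add_assoc]
  calc (((m : ℝ) / (q : ℝ) : ℝ) : EReal) ≤ factorIndex u w :=
        le_sSup ⟨m, by rw [hl]; exact hqm, hpow, by rw [hl]⟩
    _ ≤ wordIndex u := le_sSup ⟨w, hne, hfac, rfl⟩

/-- a Sturmian word of slope `ε` has finite index iff the partial quotients
of `ε` are bounded. -/
theorem sturmian_finite_index_iff_bounded_partial_quotients
    (ε x0 : ℝ) (hirr : Irrational ε) (h0 : 0 < ε) (h1 : ε < 1)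
    (hx0 : x0 ∈ Set.Ico (0:ℝ) 1) :
    wordIndex (u2 ε x0) < ⊤ ↔ ∃ K : ℕ, ∀ n : ℕ, cfa ε n ≤ K := by
  constructor
  · intro hfin
    obtain ⟨r, hr, -⟩ := EReal.lt_iff_exists_real_btwn.1 hfin
    obtain ⟨b, hb⟩ := exists_nat_gt (max r 0)
    have hbr : r < b := (le_max_left _ _).trans_lt hb
    have hb0 : 0 < b := by exact_mod_cast (le_max_right r 0).trans_lt hb
    refine ⟨2 * b, fun n => ?_⟩
    by_contra hn
    push Not at hn
    obtain ⟨q, p, hq, hc, hap⟩ := exists_good ε hirr h0 h1 n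
    have hnR : (2:ℝ) * b ≤ cfa ε n := by exact_mod_cast hn.le
    have hap' : |q * ε - p| * (2 * b * q) ≤ 1 := by
      refine le_trans (mul_le_mul_of_nonneg_left ?_ (abs_nonneg _)) hap
      exact mul_le_mul_of_nonneg_right hnR (Nat.cast_nonneg q)
    obtain ⟨i, hi⟩ := exists_window ε x0 q b p hq hb0 hc hap'
    have hqb : q ≤ b * q := Nat.le_mul_of_pos_left q hb0
    have hle := ratio_le_wordIndex (u2 ε x0) i q (b * q) hq hqb (by
      intro j hj
      exact period_of_floor ε x0 h0 h1 hx0 (i + j) q p (hi j (by omega)) (hi (j+1) (by omega)))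
    have hqR : (q:ℝ) ≠ 0 := by exact_mod_cast hq.ne'
    rw [Nat.cast_mul, mul_div_cancel_right₀ _ hqR] at hle
    have hlt : (r : EReal) < ((b:ℝ) : EReal) := EReal.coe_lt_coe_iff.2 hbr
    exact absurd (hr.trans hlt) (not_lt.2 hle)
  · rintro ⟨K, hK⟩
    refine lt_of_le_of_lt (b := (((12 * (K+1)^2 + 1 : ℕ) : ℝ) : EReal)) ?_ (EReal.coe_lt_top _)
    refine sSup_le ?_
    rintro _ ⟨w, hw, -, rfl⟩
    refine sSup_le ?_
    rintro _ ⟨m, hm, hfac, rfl⟩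
    have hq : 0 < w.length := List.length_pos_iff.2 hw
    obtain ⟨i, hi⟩ := (isFactor_powPrefix_iff _ _ _).1 hfac
    have hM := period_bound ε x0 hirr h0 h1 hx0 K hK i w.length (m - w.length) hq (by
      intro j hj
      rw [← hi j (by omega), add_assoc, ← hi (j + w.length) (by omega), Nat.add_mod_right])
    rw [EReal.coe_le_coe_iff, div_le_iff₀ (by exact_mod_cast hq)]
    have : m ≤ (12 * (K+1)^2 + 1) * w.length := by
      rw [add_mul, one_mul]; omega
    exact_mod_cast this
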